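/- arXiv:1412.0246 — 3 statements merged into one kernel-verified Lean document; each statement's English description precedes it below -/
import Mathlib

section
/- For every U ∈ Cl(p,q), the element F(U) = (1/2ⁿ) Σ_{A⊆{1,…,n}} (e^A)^{-1} U e^A lies in the center of Cl(p,q), i.e., F(U) commutes with every element of Cl(p,q). -/
/-!
Right multiplication by a generator permutes the elements `e^A` up to nonzero scalars:
`e^A e^a = s • e^(A ∆ {a})` (`eB_mul_gen`), since reordering a product of generators only
changes signs and `(e^a)² = ±1`. Scalars cancel in a conjugation, so `T_A = (e^A)⁻¹ U e^A`
satisfies `T_A e^a = e^a T_(A ∆ {a})` (`conj_mul_gen`). Since `A ↦ A ∆ {a}` is an involution of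
the index set, summing over `A` shows that `F(U)` commutes with each `e^a`; the `e^a` generate the
algebra, so `F(U)` is central.
-/

open CliffordAlgebra

/-- Diagonal metric with `p` entries `+1` and `q` entries `-1`. -/
noncomputable def eta (p q : ℕ) : Fin (p + q) → ℝ :=
  fun a => if (a : ℕ) < p then 1 else -1

/-- The quadratic form of signature `(p, q)` on `ℝⁿ`, `n = p + q`. -/
noncomputable def Qpq (p q : ℕ) : QuadraticForm ℝ (Fin (p + q) → ℝ) :=
  QuadraticMap.weightedSumSquares ℝ (eta p q)

/-- The real Clifford algebra `Cl(p, q)`. -/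
noncomputable abbrev Cl (p q : ℕ) : Type :=
  CliffordAlgebra (Qpq p q)

/-- The generator `e^a` of `Cl(p, q)`. -/
noncomputable def gen (p q : ℕ) (a : Fin (p + q)) : Cl p q :=
  CliffordAlgebra.ι (Qpq p q) (Pi.single a 1)

/-- The basis element `e^A`: the product of the generators `e^a`, `a ∈ A`,
taken in increasing order (`e^∅ = 1`). -/
noncomputable def eB (p q : ℕ) (A : Finset (Fin (p + q))) : Cl p q :=
  ((A.sort (· ≤ ·)).map (gen p q)).prod

/-- The Reynolds (averaging) operator `F(U) = 2⁻ⁿ Σ_A (e^A)⁻¹ U e^A`, the sum over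
all `2ⁿ` ordered multi-indices `A ⊆ {1,…,n}`. -/
noncomputable def Fav (p q : ℕ) (U : Cl p q) : Cl p q :=
  ((2 : ℝ) ^ (p + q))⁻¹ •
    ∑ A : Finset (Fin (p + q)), Ring.inverse (eB p q A) * U * eB p q A

/-- `x` and `y` differ by a nonzero real factor. -/
def ScalarRel {p q : ℕ} (x y : Cl p q) : Prop := ∃ s : ℝ, s ≠ 0 ∧ x = s • y

namespace ScalarRel

variable {p q : ℕ} {x y z : Cl p q}

lemma refl (x : Cl p q) : ScalarRel x x := ⟨1, one_ne_zero, (one_smul _ _).symm⟩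

lemma symm (h : ScalarRel x y) : ScalarRel y x := by
  obtain ⟨s, hs, rfl⟩ := h
  exact ⟨s⁻¹, inv_ne_zero hs, (inv_smul_smul₀ hs y).symm⟩

lemma trans (h : ScalarRel x y) (h' : ScalarRel y z) : ScalarRel x z := by
  obtain ⟨s, hs, rfl⟩ := h
  obtain ⟨t, ht, rfl⟩ := h'
  exact ⟨s * t, mul_ne_zero hs ht, smul_smul _ _ _⟩

lemma mul_left (w : Cl p q) (h : ScalarRel x y) : ScalarRel (w * x) (w * y) := by
  obtain ⟨s, hs, rfl⟩ := h
  exact ⟨s, hs, mul_smul_comm _ _ _⟩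

lemma mul_right (w : Cl p q) (h : ScalarRel x y) : ScalarRel (x * w) (y * w) := by
  obtain ⟨s, hs, rfl⟩ := h
  exact ⟨s, hs, smul_mul_assoc _ _ _⟩

end ScalarRel

lemma eta_ne_zero (p q : ℕ) (a : Fin (p + q)) : eta p q a ≠ 0 := by
  unfold eta; split_ifs <;> norm_num

lemma gen_mul_self (p q : ℕ) (a : Fin (p + q)) :
    gen p q a * gen p q a = algebraMap ℝ (Cl p q) (eta p q a) := by
  rw [gen, CliffordAlgebra.ι_sq_scalar]
  congr 1
  rw [Qpq, QuadraticMap.weightedSumSquares_apply, Finset.sum_eq_single a]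
  · simp
  · intro b _ hb
    simp [Pi.single_eq_of_ne hb]
  · simp

lemma gen_mul_gen (p q : ℕ) {a b : Fin (p + q)} (hab : a ≠ b) :
    gen p q a * gen p q b = -(gen p q b * gen p q a) := by
  refine CliffordAlgebra.ι_mul_ι_comm_of_isOrtho ?_
  rw [QuadraticMap.isOrtho_def]
  simp only [Qpq, QuadraticMap.weightedSumSquares_apply, ← Finset.sum_add_distrib]
  refine Finset.sum_congr rfl fun c _ => ?_
  by_cases hca : c = a
  · subst hca
    simp [Pi.single_eq_of_ne hab]
  · simp [Pi.single_eq_of_ne hca]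

lemma isUnit_gen (p q : ℕ) (a : Fin (p + q)) : IsUnit (gen p q a) := by
  have h : IsUnit (gen p q a * gen p q a) := by
    rw [gen_mul_self]
    exact (eta_ne_zero p q a).isUnit.map _
  exact ((Commute.refl (gen p q a)).isUnit_mul_iff.1 h).1

lemma isUnit_eB (p q : ℕ) (A : Finset (Fin (p + q))) : IsUnit (eB p q A) := by
  refine List.prod_isUnit fun x hx => ?_
  obtain ⟨a, -, rfl⟩ := List.mem_map.1 hx
  exact isUnit_gen p q a

/-- Reordering a product of generators changes it at most by a sign. -/
lemma scalarRel_of_perm (p q : ℕ) {l l' : List (Fin (p + q))} (h : l.Perm l') :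
    ScalarRel (l.map (gen p q)).prod (l'.map (gen p q)).prod := by
  induction h with
  | nil => exact .refl _
  | cons a _ ih => simpa using ih.mul_left (gen p q a)
  | swap a b l =>
    simp only [List.map_cons, List.prod_cons, ← mul_assoc]
    refine ScalarRel.mul_right _ ?_
    by_cases hab : b = a
    · subst hab
      exact .refl _
    · exact ⟨-1, by norm_num, by rw [gen_mul_gen p q hab, neg_one_smul]⟩
  | trans _ _ ih ih' => exact ih.trans ih'

lemma eB_insert (p q : ℕ) {a : Fin (p + q)} {A : Finset (Fin (p + q))} (ha : a ∉ A) :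
    ScalarRel (eB p q A * gen p q a) (eB p q (insert a A)) := by
  have hp : (A.sort (· ≤ ·) ++ [a]).Perm ((insert a A).sort (· ≤ ·)) := by
    rw [List.perm_ext_iff_of_nodup]
    · intro b
      simp [or_comm]
    · simp [List.nodup_append, ha]
    · exact Finset.sort_nodup _ _
  simpa [eB] using scalarRel_of_perm p q hp

lemma eB_mul_gen (p q : ℕ) (a : Fin (p + q)) (A : Finset (Fin (p + q))) :
    ScalarRel (eB p q A * gen p q a) (eB p q (symmDiff A {a})) := by
  by_cases ha : a ∈ A
  · have hA : symmDiff A {a} = A.erase a := by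
      ext b
      simp only [Finset.mem_symmDiff, Finset.mem_singleton, Finset.mem_erase]
      grind
    rw [hA]
    have h := (eB_insert p q (Finset.notMem_erase a A)).symm.mul_right (gen p q a)
    rw [Finset.insert_erase ha, mul_assoc, gen_mul_self] at h
    refine h.trans ⟨eta p q a, eta_ne_zero p q a, ?_⟩
    rw [Algebra.smul_def, Algebra.commutes]
  · have hA : symmDiff A {a} = insert a A := by
      ext b
      simp only [Finset.mem_symmDiff, Finset.mem_singleton, Finset.mem_insert]
      grind
    rw [hA]
    exact eB_insert p q ha

lemma conj_mul_gen (p q : ℕ) (U : Cl p q) (a : Fin (p + q)) (A : Finset (Fin (p + q))) :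
    Ring.inverse (eB p q A) * U * eB p q A * gen p q a =
      gen p q a * (Ring.inverse (eB p q (symmDiff A {a})) * U * eB p q (symmDiff A {a})) := by
  obtain ⟨s, -, h⟩ := eB_mul_gen p q a A
  have hu := isUnit_eB p q A
  have hw := isUnit_eB p q (symmDiff A {a})
  generalize eB p q A = u at *
  generalize eB p q (symmDiff A {a}) = w at *
  -- Multiplying `u * e^a = s • w` by `u⁻¹` on the left and `w⁻¹` on the right.
  have key : gen p q a * Ring.inverse w = s • Ring.inverse u := by
    calc gen p q a * Ring.inverse w
        = Ring.inverse u * (u * gen p q a) * Ring.inverse w := by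
          rw [Ring.inverse_mul_cancel_left _ _ hu]
      _ = s • Ring.inverse u := by
          rw [h, mul_assoc, smul_mul_assoc, Ring.mul_inverse_cancel _ hw, mul_smul_comm, mul_one]
  calc Ring.inverse u * U * u * gen p q a
      = s • (Ring.inverse u * U * w) := by rw [mul_assoc _ u, h, mul_smul_comm]
    _ = gen p q a * Ring.inverse w * U * w := by rw [key, smul_mul_assoc, smul_mul_assoc]
    _ = _ := by simp only [mul_assoc]

lemma commute_Fav_gen (p q : ℕ) (U : Cl p q) (a : Fin (p + q)) :
    Commute (Fav p q U) (gen p q a) := by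
  unfold Fav
  refine Commute.smul_left ?_ _
  have hinv : Function.Involutive fun A : Finset (Fin (p + q)) => symmDiff A {a} :=
    fun A => symmDiff_symmDiff_cancel_right _ _
  rw [commute_iff_eq, Finset.sum_mul, Finset.mul_sum]
  simp only [conj_mul_gen]
  exact Equiv.sum_comp hinv.toPerm
    fun B => gen p q a * (Ring.inverse (eB p q B) * U * eB p q B)

/-- `F(U) = 2⁻ⁿ Σ_A (e^A)⁻¹ U e^A` lies in the center of `Cl(p,q)`. -/
theorem reynolds_mem_center (p q : ℕ) (hn : 1 ≤ p + q) (U : Cl p q) :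
    ∀ V : Cl p q, Fav p q U * V = V * Fav p q U := by
  intro V
  change Commute (Fav p q U) V
  induction V using CliffordAlgebra.induction with
  | algebraMap r => exact (Algebra.commutes r _).symm
  | ι v =>
    rw [pi_eq_sum_univ' v, map_sum]
    refine Commute.sum_right _ _ _ fun a _ => ?_
    rw [map_smul]
    refine Commute.smul_right ?_ _
    exact commute_Fav_gen p q U a
  | mul x y hx hy => exact hx.mul_right hy
  | add x y hx hy => exact hx.add_right hy
end

section
/- Let ε ∈ ℝ with ε ≠ 0 and ε ≠ −1, and let Q^A ∈ Cl(p,q) be given for every ordered multi-index A ⊆ {1,…,n}, with Q := Q^∅ the element labelled by the empty multi-index. Then the system of equations e^A X + ε X e^A = Q^A (for all A) has a solution X ∈ Cl(p,q) if and only if Q^A = (1/(1+ε))·(e^A Q + ε Q e^A) for every A; in that case X = (1/(1+ε)) Q is a solution. -/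
/-!
Since `e^∅ = 1`, the equation labelled by the empty multi-index reads `(1 + ε) X = Q^∅`. As
`1 + ε ≠ 0`, this leaves `X = (1 + ε)⁻¹ Q^∅` as the only candidate, and substituting it, with
scalars pulled through the products, turns the remaining equations into the stated
conditions on `Q^A`.
-/

open CliffordAlgebra

/-- For `ε ≠ 0, −1`, the system `e^A X + ε X e^A = Q^A` (for all multi-indices `A`)
has a solution iff `Q^A = (1+ε)⁻¹ (e^A Q + ε Q e^A)` for every `A`, where `Q = Q^∅`;
in that case `X = (1+ε)⁻¹ Q` is a solution. -/
theorem eps_system_solvability (p q : ℕ) (hn : 1 ≤ p + q)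
    (ε : ℝ) (hε0 : ε ≠ 0) (hε1 : ε ≠ -1)
    (Q : Finset (Fin (p + q)) → Cl p q) :
    ((∃ X : Cl p q, ∀ A, eB p q A * X + ε • (X * eB p q A) = Q A) ↔
      (∀ A, Q A = (1 + ε)⁻¹ • (eB p q A * Q ∅ + ε • (Q ∅ * eB p q A)))) ∧
    ((∀ A, Q A = (1 + ε)⁻¹ • (eB p q A * Q ∅ + ε • (Q ∅ * eB p q A))) →
      ∀ A, eB p q A * ((1 + ε)⁻¹ • Q ∅) +
        ε • (((1 + ε)⁻¹ • Q ∅) * eB p q A) = Q A) := by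
  have hε : 1 + ε ≠ 0 := fun h => hε1 (by linarith)
  have hsol : (∀ A, Q A = (1 + ε)⁻¹ • (eB p q A * Q ∅ + ε • (Q ∅ * eB p q A))) →
      ∀ A, eB p q A * ((1 + ε)⁻¹ • Q ∅) +
        ε • (((1 + ε)⁻¹ • Q ∅) * eB p q A) = Q A := by
    intro h A
    rw [h A, mul_smul_comm, smul_mul_assoc, smul_comm ε, smul_add]
  refine ⟨⟨?_, fun h => ⟨_, hsol h⟩⟩, hsol⟩
  rintro ⟨X, hX⟩ A
  have h0 : Q ∅ = (1 + ε) • X := by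
    rw [← hX ∅]
    simp [eB, add_smul]
  rw [h0, mul_smul_comm, smul_mul_assoc, smul_comm ε, ← smul_add, inv_smul_smul₀ hε, hX A]
end

section
/- Let n = p + q be odd. Then the 2ⁿ × 2ⁿ matrix M with entries m_{AB} = (−1)^{|A||B|−|A∩B|} (indexed by subsets A, B of {1,…,n}) is NOT invertible. However, for any adjoint set S of multi-indices (a family of 2^{n−1} subsets of {1,…,n} containing exactly one of each complementary pair), the 2^{n−1} × 2^{n−1} submatrix L with entries l_{AB} = m_{AB} for A, B ∈ S is symmetric and invertible with L^{-1} = 2^{-(n−1)} L; equivalently L² = 2^{n−1}·I. -/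
/-! Both claims rest on viewing a row of the matrix as a multiplicative function of the column index:
`m_{AB} = ∏_{i ∈ B} χ_A(i)` with `χ_A(i) = (-1)^{|A| + [i ∈ A]}` (`Mmat_eq_prod`). Hence
`∑_B m_{AB} m_{CB} = ∏_i (1 + χ_A(i) χ_C(i))` (`sum_Mmat_mul`), which vanishes unless
`χ_A = χ_C`, that is, unless `C = A` or `C` is the complement of `A`.

For odd `n`, complementing an index does not change the entries of `M` (`Mmat_compl_left`). So `M`
has two equal rows, namely those of `∅` and of the full set, and is singular. For an adjoint set
`S`, the sum over `B ∈ S` is half of the sum over all `B` (`sum_univ_eq_two_mul`), and distinct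
elements of `S` are not complementary, so the rows of `L` are orthogonal with square norm
`2^n / 2 = 2^{n-1}`.
-/


open CliffordAlgebra

/-- The `2ⁿ × 2ⁿ` matrix with entries `m_{AB} = (−1)^{|A||B| − |A∩B|}`, recording
whether `e^A` and `e^B` commute (`+1`) or anticommute (`−1`). -/
noncomputable def Mmat (p q : ℕ) :
    Matrix (Finset (Fin (p + q))) (Finset (Fin (p + q))) ℝ :=
  fun A B => (-1 : ℝ) ^ (A.card * B.card - (A ∩ B).card)

/-- The `2^{n−1} × 2^{n−1}` submatrix of `Mmat` corresponding to the multi-indices in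
an adjoint set `S`. -/
noncomputable def Lmat (p q : ℕ) (S : Finset (Finset (Fin (p + q)))) :
    Matrix {A // A ∈ S} {A // A ∈ S} ℝ :=
  Matrix.of fun A B => Mmat p q A.1 B.1

/-- The sign `χ_A(i) = (-1)^{|A| + [i ∈ A]}`, which is the commutation sign of `e^A` and `e^i`. -/
def rowSign {n : ℕ} (A : Finset (Fin n)) (i : Fin n) : ℝ :=
  (-1) ^ A.card * if i ∈ A then -1 else 1

lemma rowSign_mul_self {n : ℕ} (A : Finset (Fin n)) (i : Fin n) :
    rowSign A i * rowSign A i = 1 := by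
  unfold rowSign
  rcases neg_one_pow_eq_or ℝ A.card with h | h <;> rw [h] <;> split_ifs <;> norm_num

/-- The truncated subtraction in the exponent is harmless because `|A ∩ B| ≤ |A||B|`. -/
lemma Mmat_eq_pow_add (p q : ℕ) (A B : Finset (Fin (p + q))) :
    Mmat p q A B = (-1 : ℝ) ^ (A.card * B.card + (A ∩ B).card) := by
  have hle : (A ∩ B).card ≤ A.card * B.card := by
    have h1 : (A ∩ B).card ≤ A.card := Finset.card_le_card Finset.inter_subset_left
    have h2 : (A ∩ B).card ≤ B.card := Finset.card_le_card Finset.inter_subset_right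
    exact (Nat.le_mul_self _).trans (Nat.mul_le_mul h1 h2)
  have h : A.card * B.card + (A ∩ B).card
      = (A.card * B.card - (A ∩ B).card) + 2 * (A ∩ B).card := by omega
  rw [h, pow_add, pow_mul]
  simp [Mmat]

lemma Mmat_eq_prod (p q : ℕ) (A B : Finset (Fin (p + q))) :
    Mmat p q A B = ∏ i ∈ B, rowSign A i := by
  rw [Mmat_eq_pow_add, pow_add, pow_mul]
  simp only [rowSign, Finset.prod_mul_distrib, Finset.prod_const, Finset.prod_ite, one_pow,
    mul_one, Finset.filter_mem_eq_inter, Finset.inter_comm B A]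

lemma Mmat_comm (p q : ℕ) (A B : Finset (Fin (p + q))) : Mmat p q A B = Mmat p q B A := by
  simp only [Mmat, mul_comm A.card, Finset.inter_comm A]

lemma rowSign_compl {n : ℕ} (hodd : Odd n) (A : Finset (Fin n)) : rowSign Aᶜ = rowSign A := by
  funext i
  have hc : Aᶜ.card + A.card = n := by simp
  have h : (-1 : ℝ) ^ Aᶜ.card * (-1) ^ A.card = -1 := by rw [← pow_add, hc, hodd.neg_one_pow]
  unfold rowSign
  rcases neg_one_pow_eq_or ℝ A.card with h1 | h1 <;> rw [h1] at h ⊢ <;>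
    by_cases hi : i ∈ A <;> simp [hi] <;> linarith

lemma Mmat_compl_left (p q : ℕ) (hodd : Odd (p + q)) (A B : Finset (Fin (p + q))) :
    Mmat p q Aᶜ B = Mmat p q A B := by
  rw [Mmat_eq_prod, Mmat_eq_prod, rowSign_compl hodd]

lemma Mmat_compl_right (p q : ℕ) (hodd : Odd (p + q)) (A B : Finset (Fin (p + q))) :
    Mmat p q A Bᶜ = Mmat p q A B := by
  rw [Mmat_comm, Mmat_compl_left p q hodd, Mmat_comm]

lemma sum_Mmat_mul (p q : ℕ) (A C : Finset (Fin (p + q))) :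
    ∑ B, Mmat p q A B * Mmat p q B C = ∏ i, (1 + rowSign A i * rowSign C i) := by
  rw [Finset.prod_one_add, Finset.powerset_univ]
  refine Finset.sum_congr rfl fun B _ => ?_
  rw [Mmat_comm p q B C, Mmat_eq_prod, Mmat_eq_prod, Finset.prod_mul_distrib]

/-- Distinct non-complementary `A`, `C` have a coordinate at which the two row signs differ:
a coordinate where membership differs if `|A| ≡ |C|` mod 2, and one where it agrees otherwise. -/
lemma exists_rowSign_mul_eq_neg_one {n : ℕ} (A C : Finset (Fin n)) (h1 : A ≠ C) (h2 : C ≠ Aᶜ) :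
    ∃ i, rowSign A i * rowSign C i = -1 := by
  have hd : ∃ i, ¬ (i ∈ A ↔ i ∈ C) := by
    by_contra! h
    exact h1 (Finset.ext h)
  have he : ∃ i, (i ∈ A ↔ i ∈ C) := by
    by_contra! h
    refine h2 (Finset.ext fun i => ?_)
    have := h i
    rw [Finset.mem_compl]
    tauto
  obtain ⟨i, hi⟩ := hd
  obtain ⟨j, hj⟩ := he
  rcases neg_one_pow_eq_or ℝ A.card with ha | ha <;>
    rcases neg_one_pow_eq_or ℝ C.card with hc | hc
  · refine ⟨i, ?_⟩
    by_cases hA : i ∈ A <;> by_cases hC : i ∈ C <;> simp_all [rowSign]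
  · refine ⟨j, ?_⟩
    by_cases hA : j ∈ A <;> by_cases hC : j ∈ C <;> simp_all [rowSign]
  · refine ⟨j, ?_⟩
    by_cases hA : j ∈ A <;> by_cases hC : j ∈ C <;> simp_all [rowSign]
  · refine ⟨i, ?_⟩
    by_cases hA : i ∈ A <;> by_cases hC : i ∈ C <;> simp_all [rowSign]

lemma sum_univ_eq_two_mul {n : ℕ} (S : Finset (Finset (Fin n))) (hS : ∀ A, A ∈ S ↔ Aᶜ ∉ S)
    (f : Finset (Fin n) → ℝ) (hf : ∀ B, f Bᶜ = f B) :
    ∑ B, f B = 2 * ∑ B ∈ S, f B := by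
  have h : ∑ B ∈ Sᶜ, f B = ∑ B ∈ S, f B := by
    refine Finset.sum_bij' (fun B _ => Bᶜ) (fun B _ => Bᶜ) ?_ ?_ ?_ ?_ ?_
    · intro B hB
      rw [hS, compl_compl]
      exact Finset.mem_compl.1 hB
    · intro B hB
      exact Finset.mem_compl.2 ((hS B).1 hB)
    · simp
    · simp
    · intro B _
      exact (hf B).symm
  rw [← Finset.sum_add_sum_compl S, h, two_mul]

lemma Lmat_mul_self (p q : ℕ) (hodd : Odd (p + q))
    (S : Finset (Finset (Fin (p + q)))) (hS : ∀ A, A ∈ S ↔ Aᶜ ∉ S) :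
    Lmat p q S * Lmat p q S = ((2 : ℝ) ^ (p + q - 1)) • (1 : Matrix _ _ ℝ) := by
  ext ⟨A, hA⟩ ⟨C, hC⟩
  have hsum : (Lmat p q S * Lmat p q S) ⟨A, hA⟩ ⟨C, hC⟩
      = ∑ B ∈ S, Mmat p q A B * Mmat p q B C := by
    rw [Matrix.mul_apply, ← Finset.sum_coe_sort S]
    rfl
  have hhalf := sum_univ_eq_two_mul S hS (fun B => Mmat p q A B * Mmat p q B C) (fun B => by
    rw [Mmat_compl_left p q hodd, Mmat_compl_right p q hodd])
  rw [sum_Mmat_mul] at hhalf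
  rw [hsum, Matrix.smul_apply, Matrix.one_apply]
  by_cases hAC : A = C
  · subst hAC
    have hpow : (2 : ℝ) ^ (p + q) = 2 * 2 ^ (p + q - 1) := by
      rw [← pow_succ', Nat.sub_add_cancel hodd.pos]
    simp only [rowSign_mul_self, Finset.prod_const, Finset.card_univ, Fintype.card_fin] at hhalf
    norm_num at hhalf
    simp only [if_true, smul_eq_mul, mul_one]
    linarith
  · have hne : C ≠ Aᶜ := fun h => (hS A).1 hA (h ▸ hC)
    obtain ⟨i, hi⟩ := exists_rowSign_mul_eq_neg_one A C hAC hne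
    rw [Finset.prod_eq_zero (Finset.mem_univ i) (by rw [hi]; norm_num)] at hhalf
    simp only [Subtype.mk.injEq, hAC, if_false, smul_zero]
    linarith

/-- For odd `n`, the `2ⁿ × 2ⁿ` matrix `M` with `m_{AB} = (−1)^{|A||B|−|A∩B|}` is not
invertible; but for any adjoint set `S` of multi-indices (one of each complementary
pair), the submatrix `L = (m_{AB})_{A,B ∈ S}` is symmetric and invertible with
`L⁻¹ = 2^{-(n−1)} L`; equivalently `L² = 2^{n−1}·I`. -/
theorem Mmat_not_invertible_Lmat_invertible_odd (p q : ℕ) (hn : 1 ≤ p + q)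
    (hodd : Odd (p + q))
    (S : Finset (Finset (Fin (p + q)))) (hS : ∀ A, A ∈ S ↔ Aᶜ ∉ S) :
    ¬ IsUnit (Mmat p q) ∧
    (Lmat p q S).IsSymm ∧
    IsUnit (Lmat p q S) ∧
    (Lmat p q S)⁻¹ = ((2 : ℝ) ^ (p + q - 1))⁻¹ • Lmat p q S ∧
    Lmat p q S * Lmat p q S = ((2 : ℝ) ^ (p + q - 1)) • (1 : Matrix _ _ ℝ) := by
  have hsq := Lmat_mul_self p q hodd S hS
  have hinv : (((2 : ℝ) ^ (p + q - 1))⁻¹ • Lmat p q S) * Lmat p q S = 1 := by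
    rw [Matrix.smul_mul, hsq, smul_smul, inv_mul_cancel₀ (by positivity), one_smul]
  refine ⟨?_, ?_, ?_, Matrix.inv_eq_left_inv hinv, hsq⟩
  · have : NeZero (p + q) := ⟨by omega⟩
    rw [Matrix.isUnit_iff_isUnit_det, isUnit_iff_ne_zero, not_not]
    refine Matrix.det_zero_of_row_eq (i := ∅) (j := ∅ᶜ) ?_ ?_
    · rw [Finset.compl_empty]
      exact Finset.univ_nonempty.ne_empty.symm
    · funext B
      exact (Mmat_compl_left p q hodd ∅ B).symm
  · ext A B
    exact Mmat_comm p q B.1 A.1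
  · exact (Matrix.isUnit_iff_isUnit_det _).2 (Matrix.isUnit_det_of_left_inverse hinv)
end
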